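/- For every tour σ on {1,…,r} with incidence vector x and positions u, the 2PATH inequality u_k − u_i + (2r−7)·x_{ik} + (r−1)·x_{ki} + (r−4)(x_{ij} + x_{jk}) ≤ 2r − 6 holds for all pairwise distinct i, j, k ∈ {2,…,r}. -/

import Mathlib

/-- A tour on the node set `Fin r`: a permutation consisting of a single cycle
through all `r` nodes. -/
def IsTour {r : ℕ} (σ : Equiv.Perm (Fin r)) : Prop :=
  σ.IsCycle ∧ ∀ i, σ i ≠ i

/-- The incidence vector of a tour `σ`: `x i j = 1` iff `j = σ i`. -/
def incidence {r : ℕ} (σ : Equiv.Perm (Fin r)) (i j : Fin r) : ℝ :=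
  if σ i = j then 1 else 0

/-- `u` gives the positions of the nodes along the tour `σ`: `u i` is the
(unique) integer in `{1, …, r}` with `σ^(u i − 1) 1 = i` (node `1` is index `0`). -/
def IsPositions {r : ℕ} [NeZero r] (σ : Equiv.Perm (Fin r)) (u : Fin r → ℕ) : Prop :=
  ∀ i, 1 ≤ u i ∧ u i ≤ r ∧ (σ ^ (u i - 1)) (0 : Fin r) = i

/-!
Along an arc `a → b` positions increase by at most one, and by exactly one unless the arc closes the
tour at node `0`. An arc `i → k` excludes the other three arcs, so the left-hand side is then at
most `2r - 6`. An arc `k → i` gives `u k - u i = -1` and, a 3-node subtour being impossible, leaves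
at most one of `i → j`, `j → k`. Without these arcs, either both `i → j` and `j → k` are present and
`u k ≤ u i + 2`, or at most one is and `u k - u i ≤ r - 2` suffices.
-/

section

variable {r : ℕ} {σ : Equiv.Perm (Fin r)}

theorem incidence_of_eq {a b : Fin r} (h : σ a = b) : incidence σ a b = 1 := if_pos h

theorem incidence_of_ne {a b : Fin r} (h : σ a ≠ b) : incidence σ a b = 0 := if_neg h

theorem incidence_add_incidence_le_one {a b c d : Fin r} (h : ¬(σ a = b ∧ σ c = d)) :
    incidence σ a b + incidence σ c d ≤ 1 := by
  rw [not_and] at h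
  unfold incidence
  split_ifs with hab hcd
  · exact absurd hcd (h hab)
  all_goals norm_num

namespace IsTour

theorem orderOf_eq (hσ : IsTour σ) : orderOf σ = r := by
  have support_eq : σ.support = Finset.univ :=
    Finset.eq_univ_of_forall fun a => Equiv.Perm.mem_support.2 (hσ.2 a)
  rw [hσ.1.orderOf, support_eq, Finset.card_univ, Fintype.card_fin]

theorem pow_apply_eq_pow_apply_iff (hσ : IsTour σ) {m n : ℕ} (a : Fin r) :
    (σ ^ m) a = (σ ^ n) a ↔ m ≡ n [MOD r] := by
  calc (σ ^ m) a = (σ ^ n) a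
    _ ↔ σ ^ m = σ ^ n :=
      ⟨fun h => hσ.1.pow_eq_pow_iff.2 ⟨a, hσ.2 a, h⟩, fun h => DFunLike.congr_fun h a⟩
    _ ↔ m ≡ n [MOD orderOf σ] := pow_eq_pow_iff_modEq
    _ ↔ m ≡ n [MOD r] := by simp only [hσ.orderOf_eq]

theorem pow_apply_ne_self (hσ : IsTour σ) {m : ℕ} (hm : m ≠ 0) (hmr : m < r) (a : Fin r) :
    (σ ^ m) a ≠ a := fun h =>
  hm (((hσ.pow_apply_eq_pow_apply_iff (n := 0) a).1 h).eq_of_lt_of_lt hmr (by omega))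

theorem not_two_cycle (hσ : IsTour σ) (hr : 2 < r) {a b : Fin r} (hab : σ a = b) : σ b ≠ a := by
  simpa [pow_succ, hab] using hσ.pow_apply_ne_self two_ne_zero hr a

theorem not_three_cycle (hσ : IsTour σ) (hr : 3 < r) {a b c : Fin r} (hab : σ a = b)
    (hbc : σ b = c) : σ c ≠ a := by
  simpa [pow_succ, hab, hbc] using hσ.pow_apply_ne_self three_ne_zero hr a

end IsTour

namespace IsPositions

variable [NeZero r] {u : Fin r → ℕ} {a b : Fin r}

theorem two_le (hu : IsPositions σ u) (ha : a ≠ 0) : 2 ≤ u a := by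
  obtain ⟨one_le, -, pow_apply⟩ := hu a
  refine one_le.lt_of_ne fun h => ha ?_
  simpa [← h] using pow_apply.symm

theorem pow_apply_zero (hu : IsPositions σ u) (a : Fin r) : (σ ^ u a) 0 = σ a := by
  obtain ⟨one_le, -, pow_apply⟩ := hu a
  rw [← Nat.sub_add_cancel one_le, pow_succ', Equiv.Perm.mul_apply, pow_apply]

theorem lt_of_apply_ne_zero (hu : IsPositions σ u) (hσ : IsTour σ) (ha : σ a ≠ 0) : u a < r := by
  refine (hu a).2.1.lt_of_ne fun h => ha ?_
  have pow_card : σ ^ r = 1 := by simpa only [hσ.orderOf_eq] using pow_orderOf_eq_one σ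
  rw [← hu.pow_apply_zero a, h, pow_card, Equiv.Perm.one_apply]

theorem apply_of_lt (hu : IsPositions σ u) (hσ : IsTour σ) (ha : u a < r) :
    u (σ a) = u a + 1 := by
  obtain ⟨one_le, le_card, pow_apply⟩ := hu (σ a)
  have modEq : u (σ a) - 1 ≡ u a [MOD r] :=
    (hσ.pow_apply_eq_pow_apply_iff 0).1 (pow_apply.trans (hu.pow_apply_zero a).symm)
  have := modEq.eq_of_lt_of_lt (by omega) ha
  omega

theorem eq_add_one (hu : IsPositions σ u) (hσ : IsTour σ) (hab : σ a = b) (hb : b ≠ 0) :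
    u b = u a + 1 :=
  hab ▸ hu.apply_of_lt hσ (hu.lt_of_apply_ne_zero hσ (hab.trans_ne hb))

theorem le_add_one (hu : IsPositions σ u) (hσ : IsTour σ) (hab : σ a = b) : u b ≤ u a + 1 := by
  subst hab
  rcases lt_or_ge (u a) r with h | h
  · exact (hu.apply_of_lt hσ h).le
  · exact (hu (σ a)).2.1.trans (h.trans (Nat.le_succ _))

end IsPositions

end

theorem two_path_reverse_valid_general (r : ℕ) [NeZero r] (hr : 4 ≤ r)
    (σ : Equiv.Perm (Fin r)) (hσ : IsTour σ)
    (u : Fin r → ℕ) (hu : IsPositions σ u)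
    (i j k : Fin r) (hi : i ≠ 0) (hij : i ≠ j) (hjk : j ≠ k) :
    (u k : ℝ) - (u i : ℝ) + (2 * (r : ℝ) - 7) * incidence σ i k
      + ((r : ℝ) - 1) * incidence σ k i
      + ((r : ℝ) - 4) * (incidence σ i j + incidence σ j k)
      ≤ 2 * (r : ℝ) - 6 := by
  have hr' : (0 : ℝ) ≤ r - 4 := sub_nonneg.2 (by exact_mod_cast hr)
  by_cases hik : σ i = k
  · have huk : (u k : ℝ) ≤ u i + 1 := by exact_mod_cast hu.le_add_one hσ hik
    rw [incidence_of_eq hik, incidence_of_ne (hσ.not_two_cycle (by omega) hik),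
      incidence_of_ne (hik.trans_ne hjk.symm),
      incidence_of_ne fun h => hij (σ.injective (hik.trans h.symm))]
    linarith
  rw [incidence_of_ne hik]
  by_cases hki : σ k = i
  · have hui : (u i : ℝ) = u k + 1 := by exact_mod_cast hu.eq_add_one hσ hki hi
    have not_path : ¬(σ i = j ∧ σ j = k) := fun h => hσ.not_three_cycle hr h.1 h.2 hki
    rw [incidence_of_eq hki]
    linarith [mul_le_of_le_one_right hr' (incidence_add_incidence_le_one not_path)]
  rw [incidence_of_ne hki]
  by_cases path : σ i = j ∧ σ j = k
  · have huk : (u k : ℝ) ≤ u i + 2 := by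
      exact_mod_cast (hu.le_add_one hσ path.2).trans
        (Nat.succ_le_succ (hu.le_add_one hσ path.1))
    rw [incidence_of_eq path.1, incidence_of_eq path.2]
    linarith
  · have hui : (2 : ℝ) ≤ u i := by exact_mod_cast hu.two_le hi
    have huk : (u k : ℝ) ≤ r := by exact_mod_cast (hu k).2.1
    linarith [mul_le_of_le_one_right hr' (incidence_add_incidence_le_one path)]

theorem two_path_reverse_valid (r : ℕ) [NeZero r] (hr : 4 ≤ r)
    (σ : Equiv.Perm (Fin r)) (hσ : IsTour σ)
    (u : Fin r → ℕ) (hu : IsPositions σ u)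
    (i j k : Fin r) (hi : i ≠ 0) (hj : j ≠ 0) (hk : k ≠ 0)
    (hij : i ≠ j) (hik : i ≠ k) (hjk : j ≠ k) :
    (u k : ℝ) - (u i : ℝ) + (2 * (r : ℝ) - 7) * incidence σ i k
      + ((r : ℝ) - 1) * incidence σ k i
      + ((r : ℝ) - 4) * (incidence σ i j + incidence σ j k)
      ≤ 2 * (r : ℝ) - 6 :=
  two_path_reverse_valid_general r hr σ hσ u hu i j k hi hij hjk
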